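/- arXiv:2211.07033 — 2 statements merged into one kernel-verified Lean document; each statement's English description precedes it below -/
import Mathlib

section
/- There is an absolute constant c > 0 such that for every constant δ with 0 < δ ≤ 1/6 the following holds: if p = p(n) ≥ n^{δ−2/3}, then a.a.s. the random graph G(n,p) contains at least c·n^{6δ} pairwise vertex-disjoint copies of K₄. -/
open Classical in
/-- The probability that the binomial random graph `G(n,p)` satisfies the property `Q`. -/
noncomputable def probGnp (n : ℕ) (p : ℝ) (Q : SimpleGraph (Fin n) → Prop) : ℝ :=
  ∑ G : SimpleGraph (Fin n),
    if Q G then p ^ G.edgeSet.ncard * (1 - p) ^ (n.choose 2 - G.edgeSet.ncard) else 0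

/-!
Fix `r` and let `ν G` be the largest number of vertex-disjoint copies of `K_r` in `G`. Deleting an
edge from `G` lowers `ν G` by at most one, and only if the edge lies in a clique of a fixed optimal
packing; such a packing has `r.choose 2 * ν G` edges. Hence the Efron–Stein inequality gives
`Var ν ≤ r.choose 2 * 𝔼 ν`, and by Chebyshev `ν` is a.a.s. at least half of any lower bound for its
mean which tends to infinity.

Since `𝔼 ν` increases with the edge density, the mean can be bounded at the density
`q = ε * n ^ (δ - 2 / (r - 1))` for a small constant `ε`. There a given copy of `K_r` is expected to
meet only few others, so removing the copies which meet another one leaves a constant proportion of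
the `n.choose r * q ^ r.choose 2` expected copies.
-/

open MeasureTheory ProbabilityTheory SimpleGraph unitInterval
open scoped Finset Nat Topology

section SetBernoulli

variable {ι : Type*} {p q : I} {u : Set ι} {a : ι}

lemma setBernoulli_real_superset {s : Finset ι} (hs : ↑s ⊆ u) :
    setBer(u, p).real {t | ↑s ⊆ t} = (p : ℝ) ^ #s := by
  have hpre : (fun f : ι → Prop ↦ {i | f i}) ⁻¹' {t | ↑s ⊆ t} = Set.pi s fun _ ↦ {True} := by
    ext f
    simp [Set.subset_def]
  have hprod : ∀ i ∈ s, (toNNReal p • Measure.dirac (i ∈ u) +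
      toNNReal (σ p) • Measure.dirac False) {True} = toNNReal p := fun i hi ↦ by simp [hs hi]
  rw [measureReal_def, setBernoulli_apply', hpre,
    Measure.infinitePi_pi _ fun _ _ ↦ .of_discrete, Finset.prod_congr rfl hprod]
  simp

lemma integral_setBernoulli_finset [Finite ι] (u : Finset ι) (f : Set ι → ℝ) :
    ∫ s, f s ∂setBer(u, p) = ∑ s ∈ u.powerset, p ^ #s * (1 - p : ℝ) ^ (#u - #s) * f s := by
  classical
  have := Fintype.ofFinite (Set ι)
  rw [integral_fintype .of_finite, ← Finset.sum_subset (Finset.subset_univ (u.powerset.image (↑))),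
    Finset.sum_image Finset.coe_injective.injOn]
  · refine Finset.sum_congr rfl fun s hs ↦ ?_
    have hsu := Finset.mem_powerset.1 hs
    rw [setBernoulli_real_singleton p (mod_cast hsu) u.finite_toSet, Set.ncard_coe_finset,
      ← Finset.coe_sdiff, Set.ncard_coe_finset, Finset.card_sdiff_of_subset hsu, smul_eq_mul]
  · intro s _ hs
    have : ¬ s ⊆ u := fun hsu ↦ hs <| by
      lift s to Finset ι using s.toFinite
      simpa using hsu
    simp [measureReal_def, setBernoulli_singleton_of_not_subset p this]

lemma integral_setBernoulli_insert [Finite ι] (ha : a ∉ u) (f : Set ι → ℝ) :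
    ∫ s, f s ∂setBer(insert a u, p) =
      (1 - p) * ∫ s, f s ∂setBer(u, p) + p * ∫ s, f (insert a s) ∂setBer(u, p) := by
  classical
  lift u to Finset ι using u.toFinite
  rw [Finset.mem_coe] at ha
  rw [← Finset.coe_insert]
  simp_rw [integral_setBernoulli_finset, Finset.sum_powerset_insert ha, Finset.mul_sum]
  congr 1 <;> refine Finset.sum_congr rfl fun s hs ↦ ?_
  · have := Finset.card_le_card (Finset.mem_powerset.1 hs)
    rw [Finset.card_insert_of_notMem ha, Nat.succ_sub this, pow_succ]
    ring
  · have has : a ∉ s := fun h ↦ ha (Finset.mem_powerset.1 hs h)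
    rw [Finset.card_insert_of_notMem ha, Finset.card_insert_of_notMem has,
      Nat.add_sub_add_right, pow_succ, Finset.coe_insert]
    ring

lemma integral_setBernoulli_mono [Finite ι] (hpq : p ≤ q) {f : Set ι → ℝ} (hf : Monotone f) :
    ∫ s, f s ∂setBer(u, p) ≤ ∫ s, f s ∂setBer(u, q) := by
  induction u, u.toFinite using Set.Finite.induction_on generalizing f with
  | empty => simp
  | @insert a u ha _ ih =>
    rw [integral_setBernoulli_insert ha, integral_setBernoulli_insert ha]
    have hout := ih hf
    have hin := ih fun s t hst ↦ hf (Set.insert_subset_insert (a := a) hst)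
    have hgap : ∫ s, f s ∂setBer(u, q) ≤ ∫ s, f (insert a s) ∂setBer(u, q) :=
      integral_mono .of_finite .of_finite fun s ↦ hf (Set.subset_insert a s)
    have hpq' : (p : ℝ) ≤ q := hpq
    calc (1 - p) * ∫ s, f s ∂setBer(u, p) + p * ∫ s, f (insert a s) ∂setBer(u, p)
        ≤ (1 - p) * ∫ s, f s ∂setBer(u, q) + p * ∫ s, f (insert a s) ∂setBer(u, q) := by
          gcongr
          exacts [one_minus_nonneg p, nonneg p]
      _ ≤ (1 - q) * ∫ s, f s ∂setBer(u, q) + q * ∫ s, f (insert a s) ∂setBer(u, q) := by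
          linarith [mul_le_mul_of_nonneg_left hgap (sub_nonneg.2 hpq')]

lemma variance_setBernoulli_insert [Finite ι] (ha : a ∉ u) (f : Set ι → ℝ) :
    Var[f; setBer(insert a u, p)] =
      (1 - p) * Var[f; setBer(u, p)] + p * Var[fun s ↦ f (insert a s); setBer(u, p)] +
        p * (1 - p) * (∫ s, (f (insert a s) - f s) ∂setBer(u, p)) ^ 2 := by
  have hL2 {v : Set ι} {g : Set ι → ℝ} : MemLp g 2 setBer(v, p) := .of_discrete
  simp only [variance_eq_sub hL2, Pi.pow_apply, integral_setBernoulli_insert ha,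
    integral_sub Integrable.of_finite Integrable.of_finite]
  ring

lemma sum_sq_sub_sdiff_insert [Fintype ι] (f : Set ι → ℝ) {s : Set ι} (ha : a ∉ s) :
    ∑ i, (f (insert a s) - f (insert a s \ {i})) ^ 2 =
      (f (insert a s) - f s) ^ 2 + ∑ i, (f (insert a s) - f (insert a (s \ {i}))) ^ 2 := by
  classical
  rw [← Finset.add_sum_erase _ _ (Finset.mem_univ a),
    ← Finset.add_sum_erase _ (fun i ↦ (f (insert a s) - f (insert a (s \ {i}))) ^ 2)
      (Finset.mem_univ a),
    Set.insert_sdiff_self_of_notMem ha, Set.sdiff_singleton_eq_self ha, sub_self,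
    zero_pow two_ne_zero, zero_add]
  congr 1
  refine Finset.sum_congr rfl fun i hi ↦ ?_
  have hai : a ∉ ({i} : Set ι) := (Finset.ne_of_mem_erase hi).symm
  rw [Set.insert_sdiff_of_notMem _ hai]

/-- The **Efron–Stein inequality**. -/
theorem variance_setBernoulli_le [Fintype ι] (f : Set ι → ℝ) :
    Var[f; setBer(u, p)] ≤ ∫ s, ∑ i, (f s - f (s \ {i})) ^ 2 ∂setBer(u, p) := by
  induction u, u.toFinite using Set.Finite.induction_on generalizing f with
  | empty => simp
  | @insert a u ha _ ih =>
    set g : Set ι → ℝ := fun s ↦ f (insert a s)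
    have hsplit : ∀ᵐ s ∂setBer(u, p), ∑ i, (f (insert a s) - f (insert a s \ {i})) ^ 2 =
        (g s - f s) ^ 2 + ∑ i, (g s - g (s \ {i})) ^ 2 := by
      filter_upwards [setBernoulli_ae_subset] with s hs
      exact sum_sq_sub_sdiff_insert f (mt (@hs a) ha)
    have hjensen : (∫ s, (g s - f s) ∂setBer(u, p)) ^ 2 ≤
        ∫ s, (g s - f s) ^ 2 ∂setBer(u, p) := by
      have hvar := variance_nonneg (fun s ↦ g s - f s) setBer(u, p)
      rw [variance_eq_sub .of_discrete] at hvar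
      exact sub_nonneg.1 hvar
    have hp := nonneg p
    have hp' := one_minus_nonneg p
    rw [variance_setBernoulli_insert ha, integral_setBernoulli_insert ha, integral_congr_ae hsplit,
      integral_add .of_finite .of_finite]
    calc (1 - p) * Var[f; setBer(u, p)] + p * Var[g; setBer(u, p)] +
          p * (1 - p) * (∫ s, (g s - f s) ∂setBer(u, p)) ^ 2
        ≤ (1 - p) * (∫ s, ∑ i, (f s - f (s \ {i})) ^ 2 ∂setBer(u, p)) +
          p * (∫ s, ∑ i, (g s - g (s \ {i})) ^ 2 ∂setBer(u, p)) +
          p * 1 * ∫ s, (g s - f s) ^ 2 ∂setBer(u, p) := by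
          gcongr
          exacts [ih f, ih g, sub_le_self _ hp]
      _ = _ := by ring

end SetBernoulli

lemma one_sub_div_le_measureReal_half_le {Ω : Type*} {m : MeasurableSpace Ω} {μ : Measure Ω}
    [IsProbabilityMeasure μ] {X : Ω → ℝ} {K c : ℝ} (hX : MemLp X 2 μ) (hc : 0 < c)
    (hcX : c ≤ μ[X]) (hvar : Var[X; μ] ≤ K * μ[X]) :
    1 - 4 * K / c ≤ μ.real {ω | c / 2 ≤ X ω} := by
  have hmean : 0 < μ[X] := hc.trans_le hcX
  have hvar0 := variance_nonneg X μ
  have hK : 0 ≤ K := nonneg_of_mul_nonneg_left (hvar0.trans hvar) hmean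
  have hfar : {ω | c / 2 ≤ X ω}ᶜ ⊆ {ω | μ[X] / 2 ≤ |X ω - μ[X]|} := fun ω hω ↦ by
    have hω : X ω < c / 2 := not_le.1 hω
    have hdev : X ω - μ[X] ≤ -(μ[X] / 2) := by linarith
    exact le_abs'.2 (.inl hdev)
  have hcheb : μ.real {ω | μ[X] / 2 ≤ |X ω - μ[X]|} ≤ Var[X; μ] / (μ[X] / 2) ^ 2 :=
    ENNReal.toReal_le_of_le_ofReal (div_nonneg hvar0 (sq_nonneg _))
      (meas_ge_le_variance_div_sq hX (half_pos hmean))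
  have htail : Var[X; μ] / (μ[X] / 2) ^ 2 ≤ 4 * K / c := calc
    Var[X; μ] / (μ[X] / 2) ^ 2 ≤ K * μ[X] / (μ[X] / 2) ^ 2 := by gcongr
    _ = 4 * K / μ[X] := by field_simp; ring
    _ ≤ 4 * K / c := by gcongr
  have hunion : 1 ≤ μ.real {ω | c / 2 ≤ X ω} + μ.real {ω | c / 2 ≤ X ω}ᶜ := by
    simpa using measureReal_union_le (μ := μ) {ω | c / 2 ≤ X ω} {ω | c / 2 ≤ X ω}ᶜ
  linarith [measureReal_mono (μ := μ) hfar]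

section BinomialRandom

variable {V : Type*} {p q : I}

instance [Finite V] : MeasurableSingletonClass (SimpleGraph V) where
  measurableSet_singleton G := by
    rw [← edgeSet_injective.preimage_image {G}, Set.image_singleton]
    exact measurable_edgeSet (.singleton _)

lemma binomialRandom_real_Ici [Finite V] (H : SimpleGraph V) :
    G(V, p).real (Set.Ici H) = (p : ℝ) ^ H.edgeSet.ncard := by
  classical
  have := Fintype.ofFinite V
  have hpre : fromEdgeSet ⁻¹' Set.Ici H = {s | (H.edgeFinset : Set (Sym2 V)) ⊆ s} := by
    ext s
    simp [le_fromEdgeSet_iff]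
  rw [binomialRandom_eq_map, map_measureReal_apply measurable_fromEdgeSet .of_discrete, hpre,
    setBernoulli_real_superset (by simp), ← Set.ncard_coe_finset, coe_edgeFinset]

lemma integral_binomialRandom [Finite V] (f : SimpleGraph V → ℝ) :
    ∫ G, f G ∂G(V, p) = ∫ s, f (fromEdgeSet s) ∂setBer(Sym2.diagSetᶜ, p) := by
  rw [binomialRandom_eq_map, integral_map measurable_fromEdgeSet.aemeasurable .of_discrete]

lemma integral_binomialRandom_mono [Finite V] (hpq : p ≤ q) {f : SimpleGraph V → ℝ}
    (hf : Monotone f) : ∫ G, f G ∂G(V, p) ≤ ∫ G, f G ∂G(V, q) := by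
  simp only [integral_binomialRandom]
  exact integral_setBernoulli_mono hpq fun s t hst ↦ hf (fromEdgeSet_mono hst)

lemma variance_binomialRandom_le [Fintype V] (f : SimpleGraph V → ℝ) :
    Var[f; G(V, p)] ≤ ∫ G, ∑ e, (f G - f (G.deleteEdges {e})) ^ 2 ∂G(V, p) := by
  classical
  rw [integral_binomialRandom, binomialRandom_eq_map,
    variance_map .of_discrete measurable_fromEdgeSet.aemeasurable]
  refine (variance_setBernoulli_le _).trans_eq ?_
  simp only [deleteEdges, fromEdgeSet_sdiff, Function.comp_apply]

open Classical in
lemma integral_binomialRandom_card_subgraphs [Finite V] {ι : Type*} (T : Finset ι)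
    (H : ι → SimpleGraph V) :
    ∫ G, (#{i ∈ T | H i ≤ G} : ℝ) ∂G(V, p) = ∑ i ∈ T, (p : ℝ) ^ (H i).edgeSet.ncard := by
  simp_rw [Finset.card_filter, Nat.cast_sum, Nat.cast_ite, Nat.cast_one, Nat.cast_zero]
  rw [integral_finsetSum _ fun _ _ ↦ .of_finite]
  refine Finset.sum_congr rfl fun i _ ↦ ?_
  rw [← binomialRandom_real_Ici, ← integral_indicator_one .of_discrete]
  rfl

end BinomialRandom

section CompleteOn

variable {V : Type*} {G : SimpleGraph V}

/-- The complete graph on the vertex set `s`, all other vertices of `V` being isolated. -/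
def completeOn (s : Finset V) : SimpleGraph V where
  Adj u v := u ∈ s ∧ v ∈ s ∧ u ≠ v
  symm := ⟨fun _ _ h ↦ ⟨h.2.1, h.1, h.2.2.symm⟩⟩
  loopless := ⟨fun _ h ↦ h.2.2 rfl⟩

lemma completeOn_le_iff {s : Finset V} : completeOn s ≤ G ↔ G.IsClique s :=
  ⟨fun h _ hu _ hv huv ↦ h ⟨hu, hv, huv⟩, fun h _ _ huv ↦ h huv.1 huv.2.1 huv.2.2⟩

lemma completeOn_inf [DecidableEq V] (s t : Finset V) :
    completeOn s ⊓ completeOn t = completeOn (s ∩ t) := by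
  ext u v
  simp only [completeOn, inf_adj, Finset.mem_inter]
  tauto

lemma ncard_edgeSet_completeOn (s : Finset V) :
    (completeOn s).edgeSet.ncard = (#s).choose 2 := by
  classical
  rw [← Sym2.card_image_offDiag, ← Set.ncard_coe_finset]
  congr 1
  ext ⟨u, v⟩
  simp only [completeOn, mem_edgeSet, Finset.coe_image, Finset.coe_offDiag, Set.mem_image,
    Set.mem_offDiag, SetLike.mem_coe, Prod.exists, Function.uncurry_apply_pair, Sym2.eq,
    Sym2.rel_iff', Prod.mk.injEq, Prod.swap_prod_mk]
  grind

lemma ncard_edgeSet_completeOn_sup_add [Finite V] [DecidableEq V] (s t : Finset V) :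
    (completeOn s ⊔ completeOn t).edgeSet.ncard + (#(s ∩ t)).choose 2 =
      (#s).choose 2 + (#t).choose 2 := by
  rw [← ncard_edgeSet_completeOn, ← ncard_edgeSet_completeOn, ← ncard_edgeSet_completeOn,
    ← completeOn_inf, edgeSet_sup, edgeSet_inf, Set.ncard_union_add_ncard_inter]

end CompleteOn

section CliquePacking

variable {V : Type*} {G G' : SimpleGraph V} {r : ℕ} {S : Finset (Finset V)}

/-- A family of vertex-disjoint copies of `K_r` in `G`, each given by its vertex set. -/
def IsCliquePacking (G : SimpleGraph V) (r : ℕ) (S : Finset (Finset V)) : Prop :=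
  (S : Set (Finset V)).PairwiseDisjoint id ∧ ∀ s ∈ S, G.IsNClique r s

/-- The largest number of vertex-disjoint copies of `K_r` in `G`, for a finite vertex type. -/
noncomputable def cliquePackingNumber (G : SimpleGraph V) (r : ℕ) : ℕ :=
  ⨆ S : {S // IsCliquePacking G r S}, #S.1

lemma isCliquePacking_iff :
    IsCliquePacking G r S ↔ (S : Set (Finset V)).Pairwise (fun s t ↦ Disjoint s t) ∧
      ∀ s ∈ S, #s = r ∧ ∀ u ∈ s, ∀ v ∈ s, u ≠ v → G.Adj u v := by
  simp only [isNClique_iff, isClique_iff, and_comm, IsCliquePacking]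
  rfl

lemma IsCliquePacking.mono (hS : IsCliquePacking G r S) (h : G ≤ G') : IsCliquePacking G' r S :=
  ⟨hS.1, fun s hs ↦ (hS.2 s hs).mono h⟩

open Classical in
lemma IsCliquePacking.deleteEdges (hS : IsCliquePacking G r S) (e : Sym2 V) :
    IsCliquePacking (G.deleteEdges {e}) r {s ∈ S | e ∉ (completeOn s).edgeSet} := by
  refine ⟨hS.1.subset (Finset.coe_subset.2 (Finset.filter_subset _ _)), fun s hs ↦ ?_⟩
  obtain ⟨hsS, hes⟩ := Finset.mem_filter.1 hs
  refine ⟨completeOn_le_iff.1 ?_, (hS.2 s hsS).card_eq⟩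
  refine (deleteEdges_eq_self.2 (Set.disjoint_singleton_right.2 hes)).symm.trans_le ?_
  exact deleteEdges_mono (completeOn_le_iff.2 (hS.2 s hsS).isClique)

open Classical in
lemma IsCliquePacking.card_filter_mem_edgeSet_le_one (hS : IsCliquePacking G r S) (e : Sym2 V) :
    #{s ∈ S | e ∈ (completeOn s).edgeSet} ≤ 1 := by
  refine Finset.card_le_one.2 fun s hs t ht ↦ by_contra fun hst ↦ ?_
  obtain ⟨hsS, hes⟩ := Finset.mem_filter.1 hs
  obtain ⟨htS, het⟩ := Finset.mem_filter.1 ht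
  induction e with
  | _ u v =>
    have hdisj : Disjoint s t := hS.1 hsS htS hst
    exact Finset.disjoint_left.1 hdisj hes.1 het.1

lemma IsCliquePacking.card_le [Finite V] (hS : IsCliquePacking G r S) :
    #S ≤ cliquePackingNumber G r :=
  le_ciSup (f := fun S : {S // IsCliquePacking G r S} ↦ #S.1) (Set.finite_range _).bddAbove ⟨S, hS⟩

variable (G r) in
lemma exists_isCliquePacking_card_eq [Finite V] :
    ∃ S, IsCliquePacking G r S ∧ #S = cliquePackingNumber G r := by
  have : Nonempty {S // IsCliquePacking G r S} := ⟨∅, by simp [IsCliquePacking]⟩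
  obtain ⟨S, hS⟩ := exists_eq_ciSup_of_finite (f := fun S : {S // IsCliquePacking G r S} ↦ #S.1)
  exact ⟨S, S.2, hS⟩

lemma le_cliquePackingNumber_iff [Finite V] {a : ℝ} :
    a ≤ cliquePackingNumber G r ↔ ∃ S, IsCliquePacking G r S ∧ a ≤ #S := by
  refine ⟨fun h ↦ ?_, fun ⟨S, hS, h⟩ ↦ h.trans (Nat.cast_le.2 hS.card_le)⟩
  obtain ⟨S, hS, hcard⟩ := exists_isCliquePacking_card_eq G r
  exact ⟨S, hS, hcard ▸ h⟩

lemma cliquePackingNumber_mono [Finite V] (r : ℕ) :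
    Monotone fun G : SimpleGraph V ↦ cliquePackingNumber G r := fun G G' h ↦ by
  obtain ⟨S, hS, hcard⟩ := exists_isCliquePacking_card_eq G r
  exact hcard.symm.trans_le (hS.mono h).card_le

open Classical in
lemma IsCliquePacking.card_le_add_deleteEdges [Finite V] (hS : IsCliquePacking G r S) (e : Sym2 V) :
    #S ≤ cliquePackingNumber (G.deleteEdges {e}) r +
      #{s ∈ S | e ∈ (completeOn s).edgeSet} := by
  rw [← Finset.card_filter_add_card_filter_not (s := S)
    fun s ↦ e ∈ (completeOn s).edgeSet, add_comm]
  exact Nat.add_le_add_right (hS.deleteEdges e).card_le _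

open Classical in
lemma IsCliquePacking.sum_card_filter_mem_edgeSet [Fintype V] (hS : IsCliquePacking G r S) :
    ∑ e, #{s ∈ S | e ∈ (completeOn s).edgeSet} = r.choose 2 * #S := by
  simp_rw [Finset.card_filter]
  rw [Finset.sum_comm, mul_comm]
  refine Finset.sum_const_nat fun s hs ↦ ?_
  rw [← Finset.card_filter, ← (hS.2 s hs).card_eq, ← ncard_edgeSet_completeOn,
    ← Set.ncard_coe_finset]
  simp

/-- The packing number is self-bounding: an edge whose deletion matters lies in a clique of every
optimal packing, and deleting it destroys only that clique. -/
lemma sum_sq_cliquePackingNumber_sub_deleteEdges_le [Fintype V] (G : SimpleGraph V) (r : ℕ) :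
    ∑ e, ((cliquePackingNumber G r : ℝ) - cliquePackingNumber (G.deleteEdges {e}) r) ^ 2 ≤
      r.choose 2 * cliquePackingNumber G r := by
  classical
  obtain ⟨S, hS, hcard⟩ := exists_isCliquePacking_card_eq G r
  rw [← hcard, ← Nat.cast_mul, ← hS.sum_card_filter_mem_edgeSet, Nat.cast_sum]
  refine Finset.sum_le_sum fun e _ ↦ ?_
  have hdel : cliquePackingNumber (G.deleteEdges {e}) r ≤ #S :=
    hcard ▸ cliquePackingNumber_mono r (deleteEdges_le {e})
  have hloss := hS.card_le_add_deleteEdges e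
  have hone := hS.card_filter_mem_edgeSet_le_one e
  rify at hdel hloss hone
  exact (pow_le_of_le_one (by linarith) (by linarith) two_ne_zero).trans (by linarith)

/-- The `r`-element vertex sets other than `s` which meet `s`. -/
def meetingSets [Fintype V] [DecidableEq V] (r : ℕ) (s : Finset V) : Finset (Finset V) :=
  {t ∈ Finset.univ.powersetCard r | t ≠ s ∧ ¬ Disjoint s t}

open Classical in
/-- Removing every clique that meets another one leaves a packing. -/
lemma card_cliques_le_cliquePackingNumber_add [Fintype V] (G : SimpleGraph V) (r : ℕ) :
    #{s ∈ Finset.univ.powersetCard r | completeOn s ≤ G} ≤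
      cliquePackingNumber G r +
        #{x ∈ (Finset.univ.powersetCard r).sigma (meetingSets r) |
          completeOn x.1 ⊔ completeOn x.2 ≤ G} := by
  set cliques : Finset (Finset V) :=
    {s ∈ Finset.univ.powersetCard r | completeOn s ≤ G}
  set pairs : Finset (Σ _ : Finset V, Finset V) :=
    {x ∈ (Finset.univ.powersetCard r).sigma (meetingSets r) |
      completeOn x.1 ⊔ completeOn x.2 ≤ G}
  have hS : IsCliquePacking G r (cliques \ pairs.image Sigma.fst) := by
    refine ⟨fun s hs t ht hst ↦ by_contra fun hmeet : ¬ Disjoint s t ↦ ?_, fun s hs ↦ ?_⟩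
    · obtain ⟨hs, hs_lone⟩ := Finset.mem_sdiff.1 hs
      obtain ⟨hsr, hsG⟩ := Finset.mem_filter.1 hs
      obtain ⟨htr, htG⟩ := Finset.mem_filter.1 (Finset.mem_sdiff.1 ht).1
      have hst_mem : ⟨s, t⟩ ∈ pairs := Finset.mem_filter.2 ⟨Finset.mem_sigma.2
        ⟨hsr, Finset.mem_filter.2 ⟨htr, hst.symm, hmeet⟩⟩, sup_le hsG htG⟩
      exact hs_lone (Finset.mem_image_of_mem _ hst_mem)
    · obtain ⟨hsr, hsG⟩ := Finset.mem_filter.1 (Finset.mem_sdiff.1 hs).1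
      exact ⟨completeOn_le_iff.1 hsG, (Finset.mem_powersetCard.1 hsr).2⟩
  calc #cliques ≤ #(cliques \ pairs.image Sigma.fst) + #(pairs.image Sigma.fst) :=
        Finset.card_le_card_sdiff_add_card
    _ ≤ cliquePackingNumber G r + #pairs := Nat.add_le_add hS.card_le Finset.card_image_le

end CliquePacking

section Overlap

variable {V : Type*} [Fintype V]

lemma card_filter_card_inter_eq_le [DecidableEq V] (s : Finset V) (r k : ℕ) :
    #{t ∈ Finset.univ.powersetCard r | #(t ∩ s) = k} ≤
      (#s).choose k * (Fintype.card V).choose (r - k) := by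
  rw [← Finset.card_powersetCard, ← Finset.card_univ, ← Finset.card_powersetCard,
    ← Finset.card_product]
  refine Finset.card_le_card_of_injOn (fun t ↦ (t ∩ s, t \ s)) (fun t ht ↦ ?_) fun t _ t' _ h ↦ ?_
  · obtain ⟨htr, htk⟩ := Finset.mem_filter.1 ht
    rw [Finset.mem_powersetCard_univ] at htr
    have hsdiff : #(t \ s) = r - k := by
      rw [← htr, ← htk, ← Finset.card_inter_add_card_sdiff t s, Nat.add_sub_cancel_left]
    simp [htk, hsdiff]
  · obtain ⟨hinter, hsdiff⟩ := Prod.ext_iff.1 h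
    rw [← Finset.sdiff_union_inter t s, ← Finset.sdiff_union_inter t' s]
    exact congrArg₂ _ hsdiff hinter

/-- An upper bound for the expected number of copies of `K_r` on `n` vertices which meet a given
copy, in a random graph of edge density `x` containing that copy; `k` counts shared vertices. -/
noncomputable def overlapBound (r n : ℕ) (x : ℝ) : ℝ :=
  ∑ k ∈ Finset.Ico 1 r, r.choose k * (n : ℝ) ^ (r - k) * x ^ (r.choose 2 - k.choose 2)

lemma card_inter_mem_Ico [DecidableEq V] {r : ℕ} {s t : Finset V} (hs : #s = r)
    (ht : t ∈ meetingSets r s) : #(t ∩ s) ∈ Finset.Ico 1 r := by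
  obtain ⟨htr, hts, hmeet⟩ := Finset.mem_filter.1 ht
  rw [Finset.mem_powersetCard_univ] at htr
  rw [Finset.mem_Ico, Nat.one_le_iff_ne_zero, Finset.card_ne_zero, Finset.inter_comm,
    ← Finset.not_disjoint_iff_nonempty_inter]
  refine ⟨hmeet, hs ▸ Finset.card_lt_card (Finset.inter_subset_left.ssubset_of_ne fun h ↦ ?_)⟩
  exact hts (Finset.eq_of_subset_of_card_le (Finset.inter_eq_left.1 h) (htr.trans hs.symm).le).symm

lemma ncard_edgeSet_completeOn_sup_of_mem_meetingSets [DecidableEq V] {r : ℕ} {s t : Finset V}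
    (hs : #s = r) (ht : t ∈ meetingSets r s) :
    (completeOn s ⊔ completeOn t).edgeSet.ncard =
      r.choose 2 + (r.choose 2 - (#(t ∩ s)).choose 2) := by
  have hshared := Nat.choose_le_choose 2 (Finset.mem_Ico.1 (card_inter_mem_Ico hs ht)).2.le
  have hunion := ncard_edgeSet_completeOn_sup_add s t
  rw [Finset.inter_comm, hs, Finset.mem_powersetCard_univ.1 (Finset.mem_filter.1 ht).1] at hunion
  omega

lemma sum_meetingSets_pow_le [DecidableEq V] {r : ℕ} {s : Finset V} (hs : #s = r) {x : ℝ}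
    (hx : 0 ≤ x) :
    ∑ t ∈ meetingSets r s, x ^ (completeOn s ⊔ completeOn t).edgeSet.ncard ≤
      x ^ r.choose 2 * overlapBound r (Fintype.card V) x := by
  rw [overlapBound, Finset.mul_sum,
    ← Finset.sum_fiberwise_of_maps_to fun t ht ↦ card_inter_mem_Ico hs ht]
  refine Finset.sum_le_sum fun k _ ↦ ?_
  have hcount : #{t ∈ meetingSets r s | #(t ∩ s) = k} ≤ r.choose k * Fintype.card V ^ (r - k) :=
    calc #{t ∈ meetingSets r s | #(t ∩ s) = k}
        ≤ #{t ∈ Finset.univ.powersetCard r | #(t ∩ s) = k} :=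
          Finset.card_le_card (Finset.filter_subset_filter _ (Finset.filter_subset _ _))
      _ ≤ (#s).choose k * (Fintype.card V).choose (r - k) := card_filter_card_inter_eq_le s r k
      _ ≤ r.choose k * Fintype.card V ^ (r - k) := by
          rw [hs]
          gcongr
          exact Nat.choose_le_pow _ _
  calc ∑ t ∈ meetingSets r s with #(t ∩ s) = k, x ^ (completeOn s ⊔ completeOn t).edgeSet.ncard
      = #{t ∈ meetingSets r s | #(t ∩ s) = k} * x ^ (r.choose 2 + (r.choose 2 - k.choose 2)) := by
        rw [← nsmul_eq_mul]
        refine Finset.sum_eq_card_nsmul fun t ht ↦ ?_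
        obtain ⟨htmeet, htk⟩ := Finset.mem_filter.1 ht
        rw [ncard_edgeSet_completeOn_sup_of_mem_meetingSets hs htmeet, htk]
    _ ≤ (r.choose k * Fintype.card V ^ (r - k) : ℕ) *
        x ^ (r.choose 2 + (r.choose 2 - k.choose 2)) := by gcongr
    _ = _ := by push_cast; ring

lemma choose_mul_pow_mul_le_integral_cliquePackingNumber (r : ℕ) (p : I) :
    (Fintype.card V).choose r * (p : ℝ) ^ r.choose 2 *
        (1 - overlapBound r (Fintype.card V) p) ≤
      ∫ G, (cliquePackingNumber G r : ℝ) ∂G(V, p) := by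
  classical
  set cliques : Finset (Finset V) := Finset.univ.powersetCard r
  have hcard : (Fintype.card V).choose r = #cliques := by
    rw [Finset.card_powersetCard, Finset.card_univ]
  set pairs : Finset (Σ _ : Finset V, Finset V) := cliques.sigma (meetingSets r)
  have hcliques : ∑ s ∈ cliques, (p : ℝ) ^ (completeOn s).edgeSet.ncard =
      #cliques * p ^ r.choose 2 := by
    rw [← nsmul_eq_mul]
    refine Finset.sum_eq_card_nsmul fun s hs ↦ ?_
    rw [ncard_edgeSet_completeOn, Finset.mem_powersetCard_univ.1 hs]
  have hpairs : ∑ x ∈ pairs, (p : ℝ) ^ (completeOn x.1 ⊔ completeOn x.2).edgeSet.ncard ≤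
      #cliques * (p ^ r.choose 2 * overlapBound r (Fintype.card V) p) := by
    rw [Finset.sum_sigma, ← nsmul_eq_mul]
    exact Finset.sum_le_card_nsmul _ _ _ fun s hs ↦
      sum_meetingSets_pow_le (Finset.mem_powersetCard_univ.1 hs) (nonneg p)
  have hdeletion := integral_mono (μ := G(V, p)) .of_finite .of_finite fun G : SimpleGraph V ↦
    Nat.cast_le (α := ℝ).2 (card_cliques_le_cliquePackingNumber_add G r)
  simp only [Nat.cast_add] at hdeletion
  rw [integral_add .of_finite .of_finite, integral_binomialRandom_card_subgraphs,
    integral_binomialRandom_card_subgraphs] at hdeletion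
  rw [hcard]
  linarith

end Overlap

lemma one_sub_div_le_binomialRandom_real_cliquePackingNumber {V : Type*} [Finite V] {r : ℕ}
    {p q : I} (hqp : q ≤ p) {c : ℝ} (hc : 0 < c)
    (hcq : c ≤ ∫ G, (cliquePackingNumber G r : ℝ) ∂G(V, q)) :
    1 - 4 * r.choose 2 / c ≤ G(V, p).real {G | c / 2 ≤ cliquePackingNumber G r} := by
  have := Fintype.ofFinite V
  have hmono : Monotone fun G : SimpleGraph V ↦ (cliquePackingNumber G r : ℝ) :=
    Nat.mono_cast.comp (cliquePackingNumber_mono r)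
  refine one_sub_div_le_measureReal_half_le .of_discrete hc
    (hcq.trans (integral_binomialRandom_mono hqp hmono)) ?_
  refine (variance_binomialRandom_le _).trans ?_
  rw [← integral_const_mul]
  exact integral_mono .of_finite .of_finite fun G ↦
    sum_sq_cliquePackingNumber_sub_deleteEdges_le G r

lemma probGnp_eq_binomialRandom_real (n : ℕ) (p : I) (Q : SimpleGraph (Fin n) → Prop) :
    probGnp n p Q = G(Fin n, p).real {G | Q G} := by
  classical
  have hQ : {G | Q G} = ({G | Q G} : Finset (SimpleGraph (Fin n))) := by simp
  rw [hQ, ← sum_measureReal_singleton, Finset.sum_filter, probGnp]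
  simp [measureReal_def]

section Asymptotics

variable {r n : ℕ} {x ε δ : ℝ}

lemma choose_two_lt_choose_two {k : ℕ} (hk : 1 ≤ k) (hkr : k < r) : k.choose 2 < r.choose 2 :=
  calc k.choose 2 < k + k.choose 2 := Nat.lt_add_of_pos_left hk
    _ = (k + 1).choose 2 := by rw [Nat.choose_succ_succ' k 1, Nat.choose_one_right]
    _ ≤ r.choose 2 := Nat.choose_le_choose 2 hkr

lemma pow_div_le_choose (hn : 2 * r ≤ n) : (n : ℝ) ^ r / (2 ^ r * r !) ≤ n.choose r := by
  have hhalf : (n : ℝ) / 2 ≤ (n + 1 - r : ℕ) := by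
    rw [div_le_iff₀ two_pos]
    exact_mod_cast (by omega : n ≤ (n + 1 - r) * 2)
  calc (n : ℝ) ^ r / (2 ^ r * r !) = (n / 2) ^ r / r ! := by rw [div_pow, div_div]
    _ ≤ (n + 1 - r : ℕ) ^ r / r ! := by gcongr
    _ ≤ n.choose r := Nat.pow_le_choose r n

lemma pow_mul_pow_le_one {k : ℕ} (hn : 1 ≤ n) (hx : 0 ≤ x) (hxn : x ≤ (n : ℝ) ^ (-(2 / r) : ℝ))
    (hk : 1 ≤ k) (hkr : k ≤ r) : (n : ℝ) ^ (r - k) * x ^ (r.choose 2 - k.choose 2) ≤ 1 := by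
  have hn0 : (0 : ℝ) < n := by positivity
  have hr0 : (0 : ℝ) < r := by exact_mod_cast hk.trans hkr
  have hexp : (r - k : ℝ) + -(2 / r) * (r.choose 2 - k.choose 2) = (k - 1) * (k - r) / r := by
    rw [Nat.cast_choose_two, Nat.cast_choose_two]
    field_simp
    ring
  have hk1 : (0 : ℝ) ≤ k - 1 := by simpa using hk
  have hkr' : (k - r : ℝ) ≤ 0 := by simpa using hkr
  calc (n : ℝ) ^ (r - k) * x ^ (r.choose 2 - k.choose 2)
      ≤ (n : ℝ) ^ (r - k) * ((n : ℝ) ^ (-(2 / r) : ℝ)) ^ (r.choose 2 - k.choose 2) := by gcongr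
    _ = (n : ℝ) ^ ((k - 1) * (k - r) / r : ℝ) := by
        rw [← Real.rpow_natCast, ← Real.rpow_mul_natCast hn0.le, ← Real.rpow_add hn0,
          Nat.cast_sub hkr, Nat.cast_sub (Nat.choose_le_choose 2 hkr), hexp]
    _ ≤ 1 := Real.rpow_le_one_of_one_le_of_nonpos (by exact_mod_cast hn)
        (div_nonpos_of_nonpos_of_nonneg (mul_nonpos_of_nonneg_of_nonpos hk1 hkr') hr0.le)

lemma overlapBound_mul_le (hn : 1 ≤ n) (hx : 0 ≤ x) (hxn : x ≤ (n : ℝ) ^ (-(2 / r) : ℝ))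
    (hε : 0 ≤ ε) (hε1 : ε ≤ 1) : overlapBound r n (ε * x) ≤ 2 ^ r * ε := by
  have hterm : ∀ k ∈ Finset.Ico 1 r,
      r.choose k * (n : ℝ) ^ (r - k) * (ε * x) ^ (r.choose 2 - k.choose 2) ≤ r.choose k * ε := by
    intro k hk
    obtain ⟨hk1, hkr⟩ := Finset.mem_Ico.1 hk
    have hgap : r.choose 2 - k.choose 2 ≠ 0 :=
      (Nat.sub_pos_of_lt (choose_two_lt_choose_two hk1 hkr)).ne'
    calc r.choose k * (n : ℝ) ^ (r - k) * (ε * x) ^ (r.choose 2 - k.choose 2)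
        = r.choose k * (ε ^ (r.choose 2 - k.choose 2) *
            ((n : ℝ) ^ (r - k) * x ^ (r.choose 2 - k.choose 2))) := by rw [mul_pow]; ring
      _ ≤ r.choose k * (ε * 1) := by
          gcongr
          exacts [pow_le_of_le_one hε hε1 hgap, pow_mul_pow_le_one hn hx hxn hk1 hkr.le]
      _ = r.choose k * ε := by rw [mul_one]
  calc overlapBound r n (ε * x) ≤ ∑ k ∈ Finset.Ico 1 r, r.choose k * ε := Finset.sum_le_sum hterm
    _ = (∑ k ∈ Finset.Ico 1 r, r.choose k : ℕ) * ε := by rw [Nat.cast_sum, Finset.sum_mul]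
    _ ≤ (∑ k ∈ Finset.range (r + 1), r.choose k : ℕ) * ε := by
        gcongr
        intro k hk
        simp only [Finset.mem_Ico, Finset.mem_range] at hk ⊢
        omega
    _ = 2 ^ r * ε := by rw [Nat.sum_range_choose]; norm_num

lemma rpow_sub_le_rpow_neg (hr : 2 ≤ r) (hn : 1 ≤ n) (hδ : δ ≤ 1 / r.choose 2) :
    (n : ℝ) ^ (δ - 2 / (r - 1)) ≤ (n : ℝ) ^ (-(2 / r) : ℝ) := by
  have hr2 : (2 : ℝ) ≤ r := by exact_mod_cast hr
  have hr1 : (0 : ℝ) < r - 1 := by linarith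
  refine Real.rpow_le_rpow_of_exponent_le (by exact_mod_cast hn) ?_
  calc δ - 2 / (r - 1) ≤ 1 / r.choose 2 - 2 / (r - 1) := by gcongr
    _ = -(2 / r) := by
      rw [Nat.cast_choose_two]
      field_simp
      ring

lemma pow_mul_rpow_pow_choose_two (hr : 2 ≤ r) (hn : 1 ≤ n) :
    (n : ℝ) ^ r * ((n : ℝ) ^ (δ - 2 / (r - 1))) ^ r.choose 2 = (n : ℝ) ^ (r.choose 2 * δ) := by
  have hn0 : (0 : ℝ) < n := by positivity
  have hr2 : (2 : ℝ) ≤ r := by exact_mod_cast hr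
  have hr1 : (r - 1 : ℝ) ≠ 0 := by linarith
  rw [← Real.rpow_natCast, ← Real.rpow_mul_natCast hn0.le, ← Real.rpow_add hn0]
  congr 1
  rw [Nat.cast_choose_two]
  field_simp
  ring

/-- The factor of `n ^ (r.choose 2 * δ)` in the lower bound for the expected packing number at edge
density `n ^ (δ - 2 / (r - 1)) / 2 ^ (r + 1)`. The power of two in the density makes the overlap
bound at most `1 / 2`. -/
noncomputable def packingConstant (r : ℕ) : ℝ :=
  (1 / 2 ^ (r + 1)) ^ r.choose 2 / (2 ^ (r + 1) * r !)

lemma packingConstant_pos (r : ℕ) : 0 < packingConstant r := by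
  rw [packingConstant]
  positivity

lemma packingConstant_mul_rpow_le_integral (hr : 2 ≤ r) (hn : 2 * r ≤ n)
    (hδ : δ ≤ 1 / r.choose 2) {q : I}
    (hq : (q : ℝ) = 1 / 2 ^ (r + 1) * (n : ℝ) ^ (δ - 2 / (r - 1))) :
    packingConstant r * (n : ℝ) ^ (r.choose 2 * δ) ≤
      ∫ G, (cliquePackingNumber G r : ℝ) ∂G(Fin n, q) := by
  set x : ℝ := (n : ℝ) ^ (δ - 2 / (r - 1))
  have hx : 0 ≤ x := by positivity
  have hn1 : 1 ≤ n := by omega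
  have hoverlap : overlapBound r n q ≤ 1 / 2 := calc
    overlapBound r n q ≤ 2 ^ r * (1 / 2 ^ (r + 1)) := hq ▸
      overlapBound_mul_le hn1 hx (rpow_sub_le_rpow_neg hr hn1 hδ) (by positivity)
        (div_le_one_of_le₀ (one_le_pow₀ one_le_two) (by positivity))
    _ = 1 / 2 := by rw [pow_succ]; field_simp
  calc packingConstant r * (n : ℝ) ^ (r.choose 2 * δ)
      = (n : ℝ) ^ r / (2 ^ r * r !) * (q : ℝ) ^ r.choose 2 * (1 - 1 / 2) := by
        rw [packingConstant, ← pow_mul_rpow_pow_choose_two hr hn1, hq, mul_pow]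
        ring
    _ ≤ n.choose r * (q : ℝ) ^ r.choose 2 * (1 - overlapBound r n q) := by
        have := nonneg q
        gcongr
        exact pow_div_le_choose hn
    _ ≤ ∫ G, (cliquePackingNumber G r : ℝ) ∂G(Fin n, q) := by
        simpa using choose_mul_pow_mul_le_integral_cliquePackingNumber (V := Fin n) r q

lemma one_sub_div_le_probGnp_cliquePackingNumber (hr : 2 ≤ r) (hn : 2 * r ≤ n)
    (hδ : δ ≤ 1 / r.choose 2) {p : I} (hp : (n : ℝ) ^ (δ - 2 / (r - 1)) ≤ p) :
    1 - 4 * r.choose 2 / (packingConstant r * (n : ℝ) ^ (r.choose 2 * δ)) ≤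
      probGnp n p fun G ↦
        packingConstant r / 2 * (n : ℝ) ^ (r.choose 2 * δ) ≤ cliquePackingNumber G r := by
  set x : ℝ := (n : ℝ) ^ (δ - 2 / (r - 1))
  have hn0 : (0 : ℝ) < n := by exact_mod_cast (by omega : 0 < n)
  have hx : 0 ≤ x := by positivity
  have hxp : 1 / 2 ^ (r + 1) * x ≤ p := (mul_le_of_le_one_left hx
    (div_le_one_of_le₀ (one_le_pow₀ one_le_two) (by positivity))).trans hp
  let q : I := ⟨1 / 2 ^ (r + 1) * x, by positivity, hxp.trans (le_one p)⟩
  rw [probGnp_eq_binomialRandom_real, div_mul_eq_mul_div]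
  exact one_sub_div_le_binomialRandom_real_cliquePackingNumber (q := q) hxp
    (mul_pos (packingConstant_pos r) (by positivity))
    (packingConstant_mul_rpow_le_integral hr hn hδ rfl)

end Asymptotics

open Filter in
theorem stmt11_general {r : ℕ} (hr : 2 ≤ r) :
    ∃ c : ℝ, 0 < c ∧ ∀ δ : ℝ, 0 < δ → δ ≤ 1 / r.choose 2 →
      ∀ p : ℕ → ℝ, (∀ n, 0 ≤ p n ∧ p n ≤ 1) →
        (∀ n : ℕ, (n : ℝ) ^ (δ - 2 / (r - 1)) ≤ p n) →
        Tendsto (fun n : ℕ ↦ probGnp n (p n) fun G ↦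
          c * (n : ℝ) ^ (r.choose 2 * δ) ≤ cliquePackingNumber G r) atTop (𝓝 1) := by
  refine ⟨packingConstant r / 2, half_pos (packingConstant_pos r), fun δ hδ hδr p hp hnp ↦ ?_⟩
  have hlim : Tendsto (fun n : ℕ ↦
      1 - 4 * r.choose 2 / (packingConstant r * (n : ℝ) ^ (r.choose 2 * δ))) atTop (𝓝 1) := by
    have hedges : (0 : ℝ) < r.choose 2 := by exact_mod_cast Nat.choose_pos hr
    have hpow : Tendsto (fun n : ℕ ↦ (n : ℝ) ^ (r.choose 2 * δ)) atTop atTop :=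
      (tendsto_rpow_atTop (by positivity)).comp tendsto_natCast_atTop_atTop
    simpa using ((hpow.const_mul_atTop (packingConstant_pos r)).const_div_atTop
      (4 * r.choose 2)).const_sub 1
  refine tendsto_of_tendsto_of_tendsto_of_le_of_le' hlim tendsto_const_nhds ?_
    (.of_forall fun n ↦ ?_)
  · filter_upwards [eventually_ge_atTop (2 * r)] with n hn
    exact one_sub_div_le_probGnp_cliquePackingNumber (p := ⟨p n, hp n⟩) hr hn hδr (hnp n)
  · rw [probGnp_eq_binomialRandom_real n ⟨p n, hp n⟩]
    exact measureReal_le_one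

open Filter in
/-- There is an absolute constant `c > 0` such that for every `0 < δ ≤ 1/6`, if
`p = p(n) ≥ n^{δ-2/3}`, then a.a.s. `G(n,p)` contains at least `c·n^{6δ}`
pairwise vertex-disjoint copies of `K₄`. -/
theorem stmt11 :
    ∃ c : ℝ, 0 < c ∧ ∀ δ : ℝ, 0 < δ → δ ≤ 1 / 6 →
      ∀ p : ℕ → ℝ, (∀ n, 0 ≤ p n ∧ p n ≤ 1) →
        (∀ n : ℕ, (n : ℝ) ^ (δ - 2 / 3) ≤ p n) →
        Tendsto (fun n : ℕ => probGnp n (p n)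
          (fun G => ∃ S : Finset (Finset (Fin n)),
            (S : Set (Finset (Fin n))).Pairwise (fun s t => Disjoint s t) ∧
            (∀ s ∈ S, s.card = 4 ∧ ∀ u ∈ s, ∀ v ∈ s, u ≠ v → G.Adj u v) ∧
            c * (n : ℝ) ^ (6 * δ) ≤ (S.card : ℝ)))
          atTop (nhds 1) := by
  have hedges : Nat.choose 4 2 = 6 := rfl
  have hdensity : (4 : ℝ) - 1 = 3 := by norm_num
  simpa only [le_cliquePackingNumber_iff, isCliquePacking_iff, and_assoc, hedges, hdensity,
    Nat.cast_ofNat] using stmt11_general (r := 4) (by norm_num)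
end

section
/- If G is a graph on at least 2 vertices and T⃗ is an oriented tree with v(T⃗) ≤ χ(G)/⌈log₂ v(G)⌉, then G → T⃗. -/
/-- `o` is an orientation of the simple graph `G`: every edge of `G` is assigned
exactly one direction, and there are no other arcs. -/
def IsOrientation {α : Type*} (G : SimpleGraph α) (o : α → α → Prop) : Prop :=
  (∀ u v, o u v → G.Adj u v) ∧ ∀ u v, G.Adj u v → (o u v ↔ ¬ o v u)

/-- The digraph `o` contains a (not necessarily induced) copy of the oriented graph `H`
as a subdigraph. -/
def HasCopy {α β : Type*} (o : α → α → Prop) (H : β → β → Prop) : Prop :=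
  ∃ f : β → α, Function.Injective f ∧ ∀ a b, H a b → o (f a) (f b)

/-- `G → H⃗`: every orientation of `G` contains a copy of `H`. -/
def Arrows {α β : Type*} (G : SimpleGraph α) (H : β → β → Prop) : Prop :=
  ∀ o : α → α → Prop, IsOrientation G o → HasCopy o H

/-!
In an oriented graph every nonempty finite vertex set `X` has an independent subset `S` such that
fewer than half of the vertices of `X` lie outside `S` and have no out-neighbour in `S`: some `v` in
`X` has at most as many out-neighbours as in-neighbours in `X`, so put `v` into `S`, give up the
out-neighbours of `v`, and continue among the non-neighbours of `v`. Repeating this on the vertices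
left over yields, for `r ≥ 1`, an `r`-colourable dominating subset of any set of at most `2 ^ r`
vertices.

A forest is then embedded leaf by leaf. If `l` is a leaf attached to `p`, remove an `r`-colourable
dominating subset `S` from `X`, embed the rest of the forest in `X \ S`, and use domination to find
an image for `l` in `S` next to the image of `p`; reversing all arcs of the host deals with the
other direction of the edge between `l` and `p`. Each leaf costs `r` colours, so a forest on `n`
vertices embeds as soon as the chromatic number exceeds `(n - 1) * r`, where `r = ⌈log₂ v(G)⌉`.
-/

section

open Finset

section Coloring

variable {V : Type*} {G : SimpleGraph V}

theorem colorable_induce_union {S T : Set V} {m n : ℕ} (hS : (G.induce S).Colorable m)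
    (hT : (G.induce T).Colorable n) : (G.induce (S ∪ T)).Colorable (m + n) := by
  classical
  obtain ⟨c⟩ := hS
  obtain ⟨d⟩ := hT
  let color (v : ↑(S ∪ T)) : Fin m ⊕ Fin n :=
    if h : v.1 ∈ S then .inl (c ⟨v, h⟩) else .inr (d ⟨v, v.2.resolve_left h⟩)
  have hcolor : ∀ {u v : ↑(S ∪ T)}, (G.induce (S ∪ T)).Adj u v → color u ≠ color v := by
    intro u v huv
    by_cases hu : u.1 ∈ S <;> by_cases hv : v.1 ∈ S
    · simpa [color, hu, hv] using c.valid (show (G.induce S).Adj ⟨u, hu⟩ ⟨v, hv⟩ from huv)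
    · simp [color, hu, hv]
    · simp [color, hu, hv]
    · simpa [color, hu, hv] using d.valid
        (show (G.induce T).Adj ⟨u, u.2.resolve_left hu⟩ ⟨v, v.2.resolve_left hv⟩ from huv)
  simpa using (SimpleGraph.Coloring.mk color hcolor).colorable

theorem colorable_one_induce_of_isIndepSet {S : Set V} (hS : G.IsIndepSet S) :
    (G.induce S).Colorable 1 :=
  SimpleGraph.colorable_one_iff.2 <| by
    ext u v
    simpa using fun huv => hS u.2 v.2 huv.ne huv

theorem not_colorable_induce_sdiff {S X : Set V} {m n : ℕ} (hSX : S ⊆ X)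
    (hS : (G.induce S).Colorable n) (hX : ¬ (G.induce X).Colorable (m + n)) :
    ¬ (G.induce (X \ S)).Colorable m := fun hXS =>
  hX (Set.sdiff_union_of_subset hSX ▸ colorable_induce_union hXS hS)

theorem nonempty_of_not_colorable_induce {X : Set V} {n : ℕ}
    (hX : ¬ (G.induce X).Colorable n) : X.Nonempty := by
  by_contra h
  have : IsEmpty X := by simpa [Set.not_nonempty_iff_eq_empty] using h
  exact hX (SimpleGraph.Colorable.of_isEmpty n)

end Coloring

namespace IsOrientation

variable {V : Type*} {G : SimpleGraph V} {o : V → V → Prop}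

theorem adj_iff (ho : IsOrientation G o) {u v : V} : G.Adj u v ↔ o u v ∨ o v u := by
  refine ⟨fun huv => ?_, Or.rec (ho.1 u v) fun hvu => (ho.1 v u hvu).symm⟩
  rw [ho.2 u v huv]
  exact (em (o v u)).symm

theorem asymm (ho : IsOrientation G o) {u v : V} (huv : o u v) : ¬ o v u :=
  (ho.2 u v (ho.1 u v huv)).1 huv

theorem swap (ho : IsOrientation G o) : IsOrientation G (Function.swap o) :=
  ⟨fun u v huv => (ho.1 v u huv).symm, fun u v huv => ho.2 v u huv.symm⟩

theorem card_filter_adj [DecidableRel G.Adj] [DecidableRel o] (ho : IsOrientation G o)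
    (X : Finset V) (v : V) : #{w ∈ X | G.Adj v w} = #{w ∈ X | o v w} + #{w ∈ X | o w v} := by
  classical
  simp only [ho.adj_iff, filter_or]
  exact card_union_of_disjoint (disjoint_filter.2 fun w _ => ho.asymm)

end IsOrientation

section Domination

variable {V : Type*} {G : SimpleGraph V} {o : V → V → Prop}

theorem exists_card_filter_out_le_card_filter_in (o : V → V → Prop) [DecidableRel o]
    {X : Finset V} (hX : X.Nonempty) :
    ∃ v ∈ X, #{w ∈ X | o v w} ≤ #{w ∈ X | o w v} :=
  exists_le_of_sum_le hX (sum_card_bipartiteAbove_eq_sum_card_bipartiteBelow o).le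

open Classical in
/-- The vertices of `X` not dominated by `S` in the digraph `o`: those outside `S` that send no arc
into `S`. In particular `S` dominates `X` when this set is empty. -/
noncomputable def undominated (o : V → V → Prop) (S X : Finset V) : Finset V :=
  {v ∈ X | v ∉ S ∧ ∀ s ∈ S, ¬ o v s}

theorem mem_undominated {S X : Finset V} {v : V} :
    v ∈ undominated o S X ↔ v ∈ X ∧ v ∉ S ∧ ∀ s ∈ S, ¬ o v s := by
  simp [undominated]

theorem undominated_union [DecidableEq V] (o : V → V → Prop) (S T X : Finset V) :
    undominated o (S ∪ T) X = undominated o T (undominated o S X) := by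
  ext v
  simp only [mem_undominated, mem_union]
  grind

theorem IsOrientation.exists_isIndepSet_card_undominated_le (ho : IsOrientation G o)
    (X : Finset V) :
    ∃ S ⊆ X, G.IsIndepSet (S : Set V) ∧ #(undominated o S X) ≤ (#X - 1) / 2 := by
  classical
  induction X using Finset.strongInduction with
  | H X ih =>
  obtain rfl | hX := X.eq_empty_or_nonempty
  · exact ⟨∅, by simp [undominated]⟩
  obtain ⟨v, hvX, hv⟩ := exists_card_filter_out_le_card_filter_in o hX
  set Y : Finset V := {w ∈ X | ¬ G.Adj v w}.erase v with hY
  have hYX : Y ⊂ X :=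
    (erase_subset_erase v (filter_subset _ X)).trans_ssubset (erase_ssubset hvX)
  have hcard : #Y + 1 + #{w ∈ X | o v w} + #{w ∈ X | o w v} = #X := by
    rw [card_erase_add_one (by simp [hvX]), add_assoc, ← ho.card_filter_adj, add_comm,
      card_filter_add_card_filter_not]
  obtain ⟨S, hSY, hS, hSc⟩ := ih Y hYX
  refine ⟨insert v S, insert_subset hvX (hSY.trans hYX.subset), ?_, ?_⟩
  · rw [coe_insert]
    refine hS.insert fun w hw _ => ?_
    have hvw : ¬ G.Adj v w := (mem_filter.1 (mem_of_mem_erase (hSY hw))).2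
    exact ⟨hvw, fun h => hvw h.symm⟩
  · have hsub : undominated o (insert v S) X ⊆ undominated o S Y ∪ {w ∈ X | o v w} := by
      intro w
      simp only [hY, mem_undominated, mem_union, mem_filter, mem_erase, mem_insert, ho.adj_iff]
      grind
    have hcardU : #(undominated o (insert v S) X) ≤ #(undominated o S Y) + #{w ∈ X | o v w} :=
      (card_le_card hsub).trans (card_union_le _ _)
    omega

theorem IsOrientation.exists_colorable_undominated_eq_empty (ho : IsOrientation G o) {r : ℕ}
    (hr : 1 ≤ r) (X : Finset V) (hX : #X ≤ 2 ^ r) :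
    ∃ S ⊆ X, (G.induce (S : Set V)).Colorable r ∧ undominated o S X = ∅ := by
  classical
  induction r, hr using Nat.le_induction generalizing X with
  | base =>
    obtain ⟨S, hSX, hS, hcard⟩ := ho.exists_isIndepSet_card_undominated_le X
    exact ⟨S, hSX, colorable_one_induce_of_isIndepSet hS, card_eq_zero.1 (by omega)⟩
  | succ r _ ih =>
    obtain ⟨S, hSX, hS, hcard⟩ := ho.exists_isIndepSet_card_undominated_le X
    obtain ⟨S', hS'U, hS', hdom⟩ := ih (undominated o S X) (by omega)
    refine ⟨S ∪ S', union_subset hSX (hS'U.trans (filter_subset _ X)), ?_, ?_⟩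
    · rw [coe_union, add_comm]
      exact colorable_induce_union (colorable_one_induce_of_isIndepSet hS) hS'
    · rw [undominated_union, hdom]

theorem IsOrientation.exists_colorable_dominating (ho : IsOrientation G o) {r : ℕ}
    (hr : 1 ≤ r) {X : Finset V} (hX : #X ≤ 2 ^ r) :
    ∃ S ⊆ X, (G.induce (S : Set V)).Colorable r ∧ ∀ v ∈ X, v ∉ S → ∃ s ∈ S, o v s := by
  obtain ⟨S, hSX, hS, hdom⟩ := ho.exists_colorable_undominated_eq_empty hr X hX
  refine ⟨S, hSX, hS, fun v hvX hvS => ?_⟩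
  by_contra! hv
  exact notMem_empty v (hdom ▸ mem_undominated.2 ⟨hvX, hvS, hv⟩)

end Domination

section Embedding

theorem exists_leaf_of_isAcyclic {γ : Type*} {F : SimpleGraph γ} (hF : F.IsAcyclic)
    {A : Finset γ} (hA : A.Nontrivial) :
    ∃ l ∈ A, ∃ p ∈ A, p ≠ l ∧ ∀ a ∈ A, F.Adj l a → a = p := by
  classical
  have : Nontrivial A := hA.coe_sort
  -- A spanning tree above the forest provides a vertex `p` even when `l` is isolated.
  obtain ⟨F', hFF', -, hF'⟩ :=
    SimpleGraph.connected_top.exists_isTree_le_of_le_of_isAcyclic le_top (hF.induce (A : Set γ))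
  obtain ⟨l, hl⟩ := hF'.exists_vert_degree_one_of_nontrivial
  obtain ⟨p, hlp, hp⟩ := SimpleGraph.degree_eq_one_iff_existsUnique_adj.1 hl
  exact ⟨l, l.2, p, p.2, fun h => hlp.ne' (Subtype.ext h),
    fun a ha hla => congrArg Subtype.val (hp ⟨a, ha⟩ (hFF' hla))⟩

variable {V γ : Type*} {G : SimpleGraph V} {o : V → V → Prop} {T : γ → γ → Prop}

/-- `f` restricts to an embedding of the subdigraph of `T` on `A` into the subdigraph of `o` on
`X`; its values off `A` are irrelevant. -/
structure IsCopyOn (T : γ → γ → Prop) (o : V → V → Prop) (f : γ → V) (A : Set γ) (X : Set V) :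
    Prop where
  mapsTo : Set.MapsTo f A X
  injOn : Set.InjOn f A
  map_arc : ∀ ⦃a⦄, a ∈ A → ∀ ⦃b⦄, b ∈ A → T a b → o (f a) (f b)

namespace IsCopyOn

variable {f : γ → V} {A : Set γ} {X : Set V}

theorem mono {Y : Set V} (hf : IsCopyOn T o f A X) (hXY : X ⊆ Y) : IsCopyOn T o f A Y :=
  { hf with mapsTo := hf.mapsTo.mono_right hXY }

theorem hasCopy (hf : IsCopyOn T o f Set.univ X) : HasCopy o T :=
  ⟨f, Set.injOn_univ.1 hf.injOn, fun a b => hf.map_arc (Set.mem_univ a) (Set.mem_univ b)⟩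

theorem exists_of_subsingleton (hT : ∀ a, ¬ T a a) (hA : A.Subsingleton) (hX : X.Nonempty) :
    ∃ f, IsCopyOn T o f A X := by
  obtain ⟨x, hx⟩ := hX
  exact ⟨fun _ => x, fun _ _ => hx, hA.injOn _,
    fun _ ha b hb hab => absurd (hA ha hb ▸ hab) (hT b)⟩

theorem update_insert [DecidableEq γ] (hf : IsCopyOn T o f A X) {l : γ} {s : V} (hl : l ∉ A)
    (hs : s ∉ X) (hll : ¬ T l l) (hto : ∀ a ∈ A, T a l → o (f a) s)
    (hfrom : ∀ a ∈ A, T l a → o s (f a)) :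
    IsCopyOn T o (Function.update f l s) (insert l A) (insert s X) := by
  have hne : ∀ a ∈ A, a ≠ l := fun a ha => ne_of_mem_of_not_mem ha hl
  have hupd : Set.EqOn (Function.update f l s) f A := fun a ha =>
    Function.update_of_ne (hne a ha) s f
  have hsA : s ∉ f '' A := fun h => hs (hf.mapsTo.image_subset h)
  refine ⟨?_, ?_, ?_⟩
  · rintro a (rfl | ha)
    · simp
    · simpa [hupd ha] using Or.inr (hf.mapsTo ha)
  · rw [Set.injOn_insert hl, hupd.injOn_iff, hupd.image_eq, Function.update_self]
    exact ⟨hf.injOn, hsA⟩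
  · rintro a (rfl | ha) b (rfl | hb) hab
    · exact absurd hab hll
    · simpa [hupd hb] using hfrom b hb hab
    · simpa [hupd ha] using hto a ha hab
    · simpa [hupd ha, hupd hb] using hf.map_arc ha hb hab

end IsCopyOn

theorem IsOrientation.exists_colorable_forall_exists_arc (ho : IsOrientation G o) {r : ℕ}
    (hr : 1 ≤ r) {X : Finset V} (hX : #X ≤ 2 ^ r) {p l : γ} (hpl : T p l → ¬ T l p) :
    ∃ S ⊆ X, (G.induce (S : Set V)).Colorable r ∧
      ∀ v ∈ X, v ∉ S → ∃ s ∈ S, (T p l → o v s) ∧ (T l p → o s v) := by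
  by_cases h : T p l
  · obtain ⟨S, hSX, hS, hdom⟩ := ho.exists_colorable_dominating hr hX
    refine ⟨S, hSX, hS, fun v hvX hvS => ?_⟩
    obtain ⟨s, hs, hvs⟩ := hdom v hvX hvS
    exact ⟨s, hs, fun _ => hvs, fun hlp => absurd hlp (hpl h)⟩
  · obtain ⟨S, hSX, hS, hdom⟩ := ho.swap.exists_colorable_dominating hr hX
    refine ⟨S, hSX, hS, fun v hvX hvS => ?_⟩
    obtain ⟨s, hs, hsv⟩ := hdom v hvX hvS
    exact ⟨s, hs, fun hpl' => absurd hpl' h, fun _ => hsv⟩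

theorem IsOrientation.exists_isCopyOn (ho : IsOrientation G o) {r : ℕ} (hr : 1 ≤ r)
    (hT : ∀ a b, T a b → ¬ T b a) (hF : (SimpleGraph.fromRel T).IsAcyclic) {n : ℕ} {A : Finset γ}
    (hA : #A ≤ n + 1) {X : Finset V} (hX : #X ≤ 2 ^ r)
    (hcol : ¬ (G.induce (X : Set V)).Colorable (n * r)) : ∃ f, IsCopyOn T o f A X := by
  classical
  have hirr : ∀ a, ¬ T a a := fun a ha => hT a a ha ha
  induction n generalizing A X with
  | zero =>
    exact IsCopyOn.exists_of_subsingleton hirr (card_le_one_iff_subsingleton.1 hA)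
      (nonempty_of_not_colorable_induce hcol)
  | succ n ih =>
    obtain hA' | hA' := (A : Set γ).subsingleton_or_nontrivial
    · exact IsCopyOn.exists_of_subsingleton hirr hA' (nonempty_of_not_colorable_induce hcol)
    obtain ⟨l, hlA, p, hpA, hpl, hleaf⟩ := exists_leaf_of_isAcyclic hF hA'
    obtain ⟨S, hSX, hS, hdom⟩ :=
      ho.exists_colorable_forall_exists_arc (T := T) hr hX (hT p l)
    have hXS : ¬ (G.induce ((X \ S : Finset V) : Set V)).Colorable (n * r) := by
      rw [coe_sdiff]
      exact not_colorable_induce_sdiff (coe_subset.2 hSX) hS (by rwa [← Nat.succ_mul])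
    obtain ⟨f, hf⟩ := ih (A := A.erase l) (by rw [card_erase_of_mem hlA]; omega)
      ((card_le_card sdiff_subset).trans hX) hXS
    obtain ⟨hfpX, hfpS⟩ := mem_sdiff.1 (hf.mapsTo (mem_erase.2 ⟨hpl, hpA⟩))
    obtain ⟨s, hs, hto, hfrom⟩ := hdom (f p) hfpX hfpS
    have hadj : ∀ a ∈ A.erase l, T a l ∨ T l a → a = p := fun a ha hal =>
      hleaf a (mem_of_mem_erase ha) ⟨(ne_of_mem_erase ha).symm, hal.symm⟩
    have hto' : ∀ a ∈ A.erase l, T a l → o (f a) s := by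
      intro a ha hal
      obtain rfl := hadj a ha (.inl hal)
      exact hto hal
    have hfrom' : ∀ a ∈ A.erase l, T l a → o s (f a) := by
      intro a ha hla
      obtain rfl := hadj a ha (.inr hla)
      exact hfrom hla
    have hcopy := hf.update_insert (notMem_erase l A) (by simp [hs]) (hirr l) hto' hfrom'
    rw [← coe_insert, insert_erase hlA] at hcopy
    exact ⟨_, hcopy.mono (Set.insert_subset (hSX hs) (coe_subset.2 sdiff_subset))⟩

end Embedding

end

theorem stmt12_general {V : Type*} [Fintype V] (G : SimpleGraph V) (hV : 2 ≤ Fintype.card V)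
    {γ : Type*} [Fintype γ] (T : γ → γ → Prop)
    (hor : ∀ a b, T a b → ¬ T b a) (hforest : (SimpleGraph.fromRel T).IsAcyclic)
    (hsize : (((Fintype.card γ - 1) * Nat.clog 2 (Fintype.card V) : ℕ) : ℕ∞) <
      G.chromaticNumber) :
    Arrows G T := by
  intro o ho
  have hcol : ¬ (G.induce ((Finset.univ : Finset V) : Set V)).Colorable
      ((Fintype.card γ - 1) * Nat.clog 2 (Fintype.card V)) := by
    rw [Finset.coe_univ]
    exact fun h => hsize.not_ge (h.of_hom G.induceUnivIso.symm.toHom).chromaticNumber_le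
  obtain ⟨f, hf⟩ := ho.exists_isCopyOn (A := .univ) (Nat.clog_pos one_lt_two hV) hor hforest
    (Nat.le_add_of_sub_le le_rfl) (Nat.le_pow_clog one_lt_two _) hcol
  rw [Finset.coe_univ] at hf
  exact hf.hasCopy

/-- If `G` is a graph on at least 2 vertices and `T⃗` is an oriented tree with
`v(T⃗) ≤ χ(G)/⌈log₂ v(G)⌉`, then `G → T⃗`. -/
theorem stmt12 {V : Type*} [Fintype V] (G : SimpleGraph V) (hV : 2 ≤ Fintype.card V)
    {γ : Type*} [Fintype γ] (T : γ → γ → Prop)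
    (hor : ∀ a b, T a b → ¬ T b a) (htree : (SimpleGraph.fromRel T).IsTree)
    (hsize : ((Fintype.card γ * Nat.clog 2 (Fintype.card V) : ℕ) : ℕ∞) ≤
      G.chromaticNumber) :
    Arrows G T :=
  have : Nonempty γ := htree.connected.nonempty
  stmt12_general G hV T hor htree.isAcyclic <| hsize.trans_lt' <| Nat.cast_lt.2 <|
    Nat.mul_lt_mul_of_pos_right (Nat.sub_one_lt Fintype.card_ne_zero) (Nat.clog_pos one_lt_two hV)
end
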